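/- Let p ≥ 1 be real, let α, β, γ ∈ (0,1) with α + β + γ = 1, and let P_XY ∈ P_n(X_n × Y_n) be a joint type whose marginals satisfy E_{P_X}[|X|^p] ≤ c_X and E_{P_Y}[|Y|^p] ≤ c_Y. Then, with c₁ = [ (3√π/2)( 2^{max{0, 1/2 − 1/p}} (c_X + c_Y)^{1/p} + 1/√6 ) ]^{2p/(2+p)}, c₂ = (4 c_X^{1/p} + 1)^{p/(1+p)}, c₃ = (4 c_Y^{1/p} + 1)^{p/(1+p)}: for every y ∈ T(P_Y), H(X|Y) − c₁ log_b(n+1)/n^{γp/(2+p)} ≤ (1/n) log_b |T(P_{X|Y}|y)| ≤ H(X|Y) + c₃ log_b(n+1)/n^{(1−β)p/(1+p)}; and for every x ∈ T(P_X), H(Y|X) − c₁ log_b(n+1)/n^{γp/(2+p)} ≤ (1/n) log_b |T(P_{Y|X}|x)| ≤ H(Y|X) + c₂ log_b(n+1)/n^{(1−α)p/(1+p)}. -/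

import Mathlib

open Set

noncomputable section

/-- A joint type with denominator `n` on the product of lattice alphabets
`{iΔx : i ∈ ℤ} × {jΔy : j ∈ ℤ}`. -/
def IsJointType (n : ℕ) (Δx Δy : ℝ) (P : ℝ × ℝ → ℝ) : Prop :=
  (∀ z, 0 ≤ P z) ∧
    (∀ z, P z ≠ 0 → (∃ i : ℤ, z.1 = (i : ℝ) * Δx) ∧ ∃ j : ℤ, z.2 = (j : ℝ) * Δy) ∧
    (∀ z, ∃ k : ℕ, P z = (k : ℝ) / n) ∧ (Function.support P).Finite ∧ ∑ᶠ z, P z = 1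

/-- The `x`-marginal of a joint type. -/
def margX (P : ℝ × ℝ → ℝ) (x : ℝ) : ℝ := ∑ᶠ y, P (x, y)

/-- The `y`-marginal of a joint type. -/
def margY (P : ℝ × ℝ → ℝ) (y : ℝ) : ℝ := ∑ᶠ x, P (x, y)

/-- Empirical distribution of a sequence `z` of length `n`. -/
def empDist {γ : Type*} (n : ℕ) (z : Fin n → γ) (a : γ) : ℝ :=
  (({k : Fin n | z k = a}).ncard : ℝ) / n

/-- The type class `T(P)`: sequences of length `n` whose empirical distribution equals `P`. -/
def typeClass {γ : Type*} (n : ℕ) (P : γ → ℝ) : Set (Fin n → γ) :=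
  {z | ∀ a, empDist n z a = P a}

/-- The conditional type class `T(P_{X|Y} | y)`: the set of sequences `x` such that the
pair sequence `(x, y)` lies in the joint type class of `P`. -/
def condTypeClassX (n : ℕ) (P : ℝ × ℝ → ℝ) (y : Fin n → ℝ) : Set (Fin n → ℝ) :=
  {x | (fun k => (x k, y k)) ∈ typeClass n P}

/-- The conditional type class `T(P_{Y|X} | x)`. -/
def condTypeClassY (n : ℕ) (P : ℝ × ℝ → ℝ) (x : Fin n → ℝ) : Set (Fin n → ℝ) :=
  {y | (fun k => (x k, y k)) ∈ typeClass n P}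

/-- Entropy with base-`b` logarithm. -/
def entropy {γ : Type*} (b : ℝ) (P : γ → ℝ) : ℝ := -∑ᶠ a, P a * Real.logb b (P a)

/-- Conditional entropy `H(X|Y)` of a joint type. -/
def condEntXY (b : ℝ) (P : ℝ × ℝ → ℝ) : ℝ := entropy b P - entropy b (margY P)

/-- Conditional entropy `H(Y|X)` of a joint type. -/
def condEntYX (b : ℝ) (P : ℝ × ℝ → ℝ) : ℝ := entropy b P - entropy b (margX P)

/-- `c₁` of Lemma 2. -/
def c1 (p cX cY : ℝ) : ℝ :=
  ((3 * Real.sqrt Real.pi / 2) *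
      ((2 : ℝ) ^ (max 0 (1 / 2 - 1 / p)) * (cX + cY) ^ (1 / p) + 1 / Real.sqrt 6)) ^
    (2 * p / (2 + p))

/-- `c₂` of Lemma 2. -/
def c2 (p cX : ℝ) : ℝ := (4 * cX ^ (1 / p) + 1) ^ (p / (1 + p))

/-- `c₃` of Lemma 2. -/
def c3 (p cY : ℝ) : ℝ := (4 * cY ^ (1 / p) + 1) ^ (p / (1 + p))

open Nat in
lemma fact_pow_le (k j : ℕ) : k ! * k^j ≤ j ! * k^k := by
  rcases le_total k j with h | h
  · have := Nat.factorial_mul_pow_sub_le_factorial h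
    calc k ! * k^j = k ! * k^(j-k) * k^k := by rw [mul_assoc, ← pow_add, Nat.sub_add_cancel h]
      _ ≤ _ := Nat.mul_le_mul_right _ this
  · have h1 := Nat.factorial_mul_descFactorial (Nat.sub_le k j)
    have h2 := Nat.descFactorial_le_pow k (k-j)
    rw [Nat.sub_sub_self h] at h1
    calc k ! * k^j ≤ (j ! * k^(k-j)) * k^j := by
          rw [← h1]; gcongr
      _ = _ := by rw [mul_assoc, ← pow_add, Nat.sub_add_cancel h]

open Nat in
lemma bin_term (m k j : ℕ) (hj : j ≤ m + k) :
    m^j * k^(m+k-j) * (m+k).choose j * (m ! * k !) ≤ (m+k)! * (m^m*k^k) := by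
  have h1 := fact_pow_le m j
  have h2 := fact_pow_le k (m+k-j)
  have h3 := Nat.choose_mul_factorial_mul_factorial hj
  calc _ = (m+k).choose j * ((m ! * m^j) * (k ! * k^(m+k-j))) := by ring
    _ ≤ (m+k).choose j * ((j ! * m^m) * ((m+k-j)! * k^k)) := by gcongr
    _ = ((m+k).choose j * j ! * (m+k-j)!) * (m^m*k^k) := by ring
    _ = _ := by rw [h3]

open Nat in
lemma bin_lower (m k : ℕ) :
    (m+k)^(m+k) * (m ! * k !) ≤ (m+k)! * (m^m*k^k) * (m+k+1) := by
  rw [add_pow, Finset.sum_mul]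
  refine (Finset.sum_le_card_nsmul _ _ ((m+k)! * (m^m*k^k)) ?_).trans ?_
  · intro j hj
    exact bin_term m k j (by simpa [Nat.lt_succ_iff] using hj)
  · simp [mul_comm]

open Nat in
lemma bin_upper (m k : ℕ) :
    (m+k)! * (m^m*k^k) ≤ (m+k)^(m+k) * (m ! * k !) := by
  have h3 := Nat.add_choose_mul_factorial_mul_factorial m k
  rw [← Nat.choose_symm_add] at h3
  have h : m^m * k^k * (m+k).choose m ≤ (m+k)^(m+k) := by
    rw [add_pow]
    have := Finset.single_le_sum (f := fun j => m^j * k^(m+k-j) * (m+k).choose j)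
      (s := Finset.range (m+k+1)) (fun _ _ => Nat.zero_le _) (a := m) (by simp)
    simpa using this
  calc _ = (m^m * k^k * (m+k).choose m) * (m ! * k !) := by rw [← h3]; ring
    _ ≤ _ := Nat.mul_le_mul_right _ h

open Nat in
lemma multi_lower {ι : Type*} (s : Finset ι) (k : ι → ℕ) (n : ℕ) (h : ∑ i ∈ s, k i ≤ n) :
    (∑ i ∈ s, k i)^(∑ i ∈ s, k i) * ∏ i ∈ s, (k i)! ≤
      (∑ i ∈ s, k i)! * (∏ i ∈ s, k i ^ k i) * (n+1)^s.card := by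
  classical
  induction s using Finset.induction_on with
  | empty => simp
  | insert a s ha ih =>
    rw [Finset.sum_insert ha] at h
    rw [Finset.sum_insert ha, Finset.prod_insert ha, Finset.prod_insert ha, Finset.card_insert_of_notMem ha]
    have ih := ih (by omega)
    set m := ∑ i ∈ s, k i
    have hb := bin_lower (k a) m
    refine Nat.le_of_mul_le_mul_right ?_ (Nat.factorial_pos m)
    calc (k a + m)^(k a+m) * ((k a)! * ∏ i ∈ s, (k i)!) * m !
        = ((k a + m)^(k a+m) * ((k a)! * m !)) * ∏ i ∈ s, (k i)! := by ring
      _ ≤ ((k a + m)! * (k a ^ k a * m^m) * (k a + m +1)) * ∏ i ∈ s, (k i)! := by gcongr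
      _ = ((k a + m)! * k a ^ k a) * (k a + m +1) * (m^m * ∏ i ∈ s, (k i)!) := by ring
      _ ≤ ((k a + m)! * k a ^ k a) * (n +1) * (m ! * (∏ i ∈ s, k i ^ k i) * (n+1)^s.card) := by gcongr
      _ = _ := by ring

open Nat in
lemma multi_upper {ι : Type*} (s : Finset ι) (k : ι → ℕ) :
      (∑ i ∈ s, k i)! * (∏ i ∈ s, k i ^ k i) ≤
    (∑ i ∈ s, k i)^(∑ i ∈ s, k i) * ∏ i ∈ s, (k i)! := by
  classical
  induction s using Finset.induction_on with
  | empty => simp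
  | insert a s ha ih =>
    rw [Finset.sum_insert ha, Finset.prod_insert ha, Finset.prod_insert ha]
    set m := ∑ i ∈ s, k i
    have hb := bin_upper (k a) m
    have hpos : 0 < m^m := by
      rcases Nat.eq_zero_or_pos m with h | h
      · simp [h]
      · positivity
    refine Nat.le_of_mul_le_mul_right ?_ (Nat.mul_pos (Nat.factorial_pos m) hpos)
    calc (k a + m)! * (k a ^ k a * ∏ i ∈ s, k i ^ k i) * (m ! * m^m)
        = ((k a + m)! * (k a ^ k a * m^m)) * (m ! * ∏ i ∈ s, k i ^ k i) := by ring
      _ ≤ ((k a + m)^(k a+m) * ((k a)! * m !)) * (m^m * ∏ i ∈ s, (k i)!) := by gcongr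
      _ = _ := by ring

lemma exists_perm_of_count {ι κ γ : Type*} [Finite ι] [Finite κ] (f : ι → γ) (g : κ → γ)
    (h : ∀ a, {i | f i = a}.ncard = {i | g i = a}.ncard) : ∃ e : ι ≃ κ, ∀ i, g (e i) = f i := by
  classical
  have : ∀ c, Nonempty ({a // f a = c} ≃ {b // g b = c}) := fun c => by
    have := h c
    rw [← Nat.card_coe_set_eq, ← Nat.card_coe_set_eq] at this
    exact Finite.card_eq.1 this
  exact ⟨Equiv.ofFiberEquiv (fun c => (this c).some), fun i => Equiv.ofFiberEquiv_map _ i⟩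

open Nat in
lemma stab_card {n : ℕ} {γ : Type*} (f : Fin n → γ) (F : Finset γ) (hF : ∀ i, f i ∈ F) :
    Nat.card {g : Equiv.Perm (Fin n) // f ∘ g = f} = ∏ a ∈ F, ({i | f i = a}.ncard)! := by
  classical
  rw [Nat.card_eq_fintype_card, DomMulAct.stabilizer_card']
  have h : ∀ a, Fintype.card {i // f i = a} = {i | f i = a}.ncard := fun a => by
    rw [← Nat.card_coe_set_eq, Nat.card_eq_fintype_card]; rfl
  simp_rw [h]
  apply Finset.prod_subset
  · intro a; simp only [Finset.mem_image]; rintro ⟨i, -, rfl⟩; exact hF i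
  · intro a _ ha
    have : {i | f i = a} = ∅ := by
      ext i; simp only [mem_ofPred_eq, mem_empty_iff_false, iff_false]
      rintro rfl; exact ha (by simp)
    rw [this]; simp

open Nat in
lemma class_card {n : ℕ} (k : ℝ × ℝ → ℕ) (S : Finset (ℝ × ℝ)) (hS : ∀ z, z ∉ S → k z = 0)
    (y : Fin n → ℝ)
    (hy : ∀ b, {i | y i = b}.ncard = ∑ z ∈ S with z.2 = b, k z) :
    {x : Fin n → ℝ | ∀ z, {i | (x i, y i) = z}.ncard = k z}.ncard * ∏ z ∈ S, (k z)! =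
      ∏ b ∈ S.image Prod.snd, (∑ z ∈ S with z.2 = b, k z)! := by
  classical
  set T := {x : Fin n → ℝ | ∀ z, {i | (x i, y i) = z}.ncard = k z} with hT
  -- existence
  obtain ⟨x0, hx0⟩ : T.Nonempty := by
    let A := Σ z : S, Fin (k z)
    let w : A → ℝ × ℝ := fun a => a.1
    have hw : ∀ z, {a | w a = z}.ncard = k z := by
      intro z
      by_cases hz : z ∈ S
      · rw [← Nat.card_coe_set_eq]
        have e : {a : A | w a = z} ≃ Fin (k z) :=
          { toFun := fun a => Fin.cast (congrArg k a.2) a.1.2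
            invFun := fun j => ⟨⟨⟨z, hz⟩, j⟩, rfl⟩
            left_inv := by
              rintro ⟨⟨⟨z', hz'⟩, j⟩, h⟩
              change z' = z at h
              subst h
              rfl
            right_inv := fun j => rfl }
        rw [Nat.card_congr e, Nat.card_fin]
      · rw [hS z hz]
        have : {a : A | w a = z} = ∅ := by
          ext a; simp only [mem_ofPred_eq, mem_empty_iff_false, iff_false]
          rintro rfl; exact hz a.1.2
        rw [this]; simp
    obtain ⟨e, he⟩ := exists_perm_of_count y (fun a => (w a).2) (by
      intro b
      rw [hy b]
      rw [Set.ncard_eq_toFinset_card', Finset.card_eq_sum_card_fiberwise (f := w)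
        (t := S.filter (fun z => z.2 = b))]
      · refine Finset.sum_congr rfl fun z hz => ?_
        rw [← hw z, Set.ncard_eq_toFinset_card']
        congr 1
        ext a
        have := (Finset.mem_filter.1 hz).2
        simp only [mem_toFinset, mem_ofPred_eq, Finset.mem_filter]
        constructor
        · rintro rfl; exact ⟨this, rfl⟩
        · exact fun h => h.2
      · intro a ha
        simpa [w] using ha)
    refine ⟨fun i => (w (e i)).1, fun z => ?_⟩
    rw [← hw z]
    have : {i | ((w (e i)).1, y i) = z} = e ⁻¹' {a | w a = z} := by
      ext i; simp [← he i]
    rw [this, Set.ncard_preimage_of_injective_subset_range e.injective (by simp)]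
  have hzS : ∀ i, (x0 i, y i) ∈ S := by
    intro i; by_contra h
    have h1 := hx0 (x0 i, y i)
    rw [hS _ h, Set.ncard_eq_zero] at h1
    have : i ∈ ({j | (x0 j, y j) = (x0 i, y i)} : Set (Fin n)) := rfl
    rw [h1] at this; exact this
  have h1 := stab_card (fun i => (x0 i, y i)) S hzS
  have h2 := stab_card y (S.image Prod.snd) (fun i => Finset.mem_image.2 ⟨_, hzS i, rfl⟩)
  simp_rw [hy] at h2
  have h1' : ∀ z, {i | (x0 i, y i) = z}.ncard = k z := hx0
  simp_rw [h1'] at h1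
  rw [← h1, ← h2, ← Nat.card_coe_set_eq, ← Nat.card_prod]
  have hg : ∀ x : T, ∃ g : Equiv.Perm (Fin n), ∀ i, (x0 (g i), y (g i)) = (x.1 i, y i) := fun x =>
    exists_perm_of_count (fun i => (x.1 i, y i)) (fun i => (x0 i, y i)) (by
      intro a; exact (x.2 a).trans (hx0 a).symm)
  choose G hG using hg
  apply Nat.card_congr
  symm
  have memT : ∀ g : Equiv.Perm (Fin n), y ∘ g = y → x0 ∘ g ∈ T := by
    intro g hgy z
    rw [← hx0 z]
    have : {i | ((x0 ∘ g) i, y i) = z} = g ⁻¹' {i | (x0 i, y i) = z} := by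
      ext i; simp [show y (g i) = y i from congrFun hgy i]
    rw [this, Set.ncard_preimage_of_injective_subset_range g.injective (by simp)]
  have inv1 : ∀ (x : T) j, (x.1 ((G x).symm j), y ((G x).symm j)) = (x0 j, y j) := fun x j => by
    rw [← hG x]; simp
  refine
    { toFun := fun g => (⟨x0 ∘ g.1, memT g.1 g.2⟩,
        ⟨g.1 * (G ⟨x0 ∘ g.1, memT g.1 g.2⟩)⁻¹, ?_⟩)
      invFun := fun q => ⟨q.2.1 * G q.1, ?_⟩
      left_inv := ?_
      right_inv := ?_ }
  · funext i
    have := inv1 ⟨x0 ∘ g.1, memT g.1 g.2⟩ i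
    have hy' := congrFun g.2 ((G ⟨x0 ∘ g.1, memT g.1 g.2⟩).symm i)
    simp only [Function.comp_apply, Prod.mk.injEq] at this hy'
    simp only [Function.comp_apply, Equiv.Perm.coe_mul, Prod.mk.injEq, Equiv.Perm.inv_def]
    exact ⟨this.1, hy'.trans this.2⟩
  · funext i
    have := congrFun q.2.2 (G q.1 i)
    have h' := hG q.1 i
    simp only [Function.comp_apply, Prod.mk.injEq] at this h'
    simp only [Function.comp_apply, Equiv.Perm.coe_mul]
    exact this.2.trans h'.2
  · intro g; simp
  · rintro ⟨x, g⟩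
    have hx : (x0 ∘ (g.1 * G x : Equiv.Perm (Fin n))) = x.1 := by
      funext i
      have := congrFun g.2 (G x i)
      have h' := hG x i
      simp only [Function.comp_apply, Prod.mk.injEq] at this h'
      simp only [Function.comp_apply, Equiv.Perm.coe_mul]
      exact this.1.trans h'.1
    have hx' : ∀ h, (⟨x0 ∘ (g.1 * G x : Equiv.Perm (Fin n)), h⟩ : T) = x := fun h => Subtype.ext hx
    simp only [hx']
    ext <;> simp

open MeasureTheory in
lemma cone_integral (R : ℝ) (hR : 0 ≤ R) :
    ∫ u : ℝ × ℝ, max 0 (R - Real.sqrt (u.1^2 + u.2^2)) = Real.pi * R^3 / 3 := by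
  rw [← integral_comp_polarCoord_symm]
  have h1 : ∫ q in polarCoord.target, q.1 • (fun u : ℝ × ℝ => max 0 (R - Real.sqrt (u.1^2 + u.2^2)))
        (polarCoord.symm q)
      = ∫ q in polarCoord.target, (q.1 * max 0 (R - q.1)) * 1 := by
    refine setIntegral_congr_fun polarCoord.open_target.measurableSet ?_
    intro q hq
    have hq1 : 0 < q.1 := by
      have := hq.1; simpa using this
    have : (q.1 * Real.cos q.2)^2 + (q.1 * Real.sin q.2)^2 = q.1^2 := by
      have := Real.sin_sq_add_cos_sq q.2
      linear_combination q.1^2 * this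
    simp only [polarCoord_symm_apply, this, Real.sqrt_sq hq1.le, smul_eq_mul, mul_one]
  refine h1.trans ?_
  rw [polarCoord_target]
  have h2 := setIntegral_prod_mul (μ := (volume : Measure ℝ)) (ν := (volume : Measure ℝ))
    (fun r : ℝ => r * max 0 (R - r)) (fun _ : ℝ => (1:ℝ)) (Ioi 0) (Ioo (-Real.pi) Real.pi)
  refine h2.trans ?_
  have h3 : ∫ r in Ioi (0:ℝ), r * max 0 (R - r) = R^3/6 := by
    have : ∫ r in Ioi (0:ℝ), r * max 0 (R - r) = ∫ r in Ioc (0:ℝ) R, r * max 0 (R - r) := by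
      refine setIntegral_eq_of_subset_of_forall_sdiff_eq_zero measurableSet_Ioi
        Ioc_subset_Ioi_self ?_
      intro r hr
      have : R < r := by
        by_contra h
        exact hr.2 ⟨hr.1, not_lt.1 h⟩
      rw [max_eq_left (by linarith)]; simp
    rw [this, ← intervalIntegral.integral_of_le hR]
    have : ∫ r in (0:ℝ)..R, r * max 0 (R - r) = ∫ r in (0:ℝ)..R, (R * r - r^2) := by
      refine intervalIntegral.integral_congr ?_
      intro r hr
      rw [uIcc_of_le hR] at hr
      simp only [max_eq_right (sub_nonneg.2 hr.2)]; ring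
    rw [this, intervalIntegral.integral_sub (Continuous.intervalIntegrable (by fun_prop) _ _)
      (Continuous.intervalIntegrable (by fun_prop) _ _), intervalIntegral.integral_const_mul, integral_id, integral_pow]
    push_cast
    ring
  rw [h3]
  have := Real.pi_pos
  simp only [integral_const, smul_eq_mul, mul_one, measureReal_restrict_apply_univ,
    Real.volume_real_Ioo]
  rw [max_eq_left (by linarith)]
  ring

open MeasureTheory in
lemma cone_integrable (R : ℝ) :
    Integrable (fun u : ℝ × ℝ => max 0 (R - Real.sqrt (u.1^2 + u.2^2))) := by
  refine Continuous.integrable_of_hasCompactSupport (by fun_prop) ?_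
  refine HasCompactSupport.of_support_subset_isCompact (isCompact_closedBall (0 : ℝ × ℝ) R) ?_
  intro u hu
  rw [mem_closedBall_zero_iff, Prod.norm_def]
  by_contra h
  apply hu
  have : R ≤ Real.sqrt (u.1^2 + u.2^2) := by
    rw [not_le] at h
    refine h.le.trans (max_le ?_ ?_)
    · exact Real.abs_le_sqrt (by nlinarith [sq_nonneg u.2])
    · exact Real.abs_le_sqrt (by nlinarith [sq_nonneg u.1])
  exact max_eq_left (by linarith)

lemma norm_tri (a b s t : ℝ) :
    Real.sqrt (a^2+b^2) ≤ Real.sqrt (s^2+t^2) + Real.sqrt ((a-s)^2+(b-t)^2) := by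
  have := norm_add_le (⟨s,t⟩ : ℂ) ⟨a-s,b-t⟩
  simp only [Complex.norm_def, Complex.normSq_apply, Complex.add_re, Complex.add_im] at this
  convert this using 3 <;> ring_nf

open MeasureTheory in
lemma cell_bound (R dx dy s t : ℝ) (hx : 0 < dx) (hy : 0 < dy) (hx1 : dx ≤ 1) (hy1 : dy ≤ 1) :
    dx * dy * (R - Real.sqrt (s^2+t^2) - 1 / Real.sqrt 6) ≤
      ∫ u in (Ioc (s-dx/2) (s+dx/2)) ×ˢ (Ioc (t-dy/2) (t+dy/2)),
        max 0 (R - Real.sqrt (u.1^2 + u.2^2)) := by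
  set c := 1 / Real.sqrt 6 with hc
  have hc0 : 0 < c := by positivity
  have hcc : c^2 = 1/6 := by rw [hc, div_pow, Real.sq_sqrt (by norm_num)]; norm_num
  set K := R - Real.sqrt (s^2+t^2) - c/2 with hK
  let h : ℝ × ℝ → ℝ := fun u => K - ((u.1-s)^2 + (u.2-t)^2) / (2*c)
  have hcont : Continuous h := by fun_prop
  have hIntegral : IntegrableOn h ((Ioc (s-dx/2) (s+dx/2)) ×ˢ (Ioc (t-dy/2) (t+dy/2))) := by
    refine IntegrableOn.mono_set (hcont.continuousOn.integrableOn_compact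
      ((isCompact_Icc (a := s-dx/2) (b := s+dx/2)).prod (isCompact_Icc (a := t-dy/2) (b := t+dy/2)))) ?_
    exact prod_mono Ioc_subset_Icc_self Ioc_subset_Icc_self
  have hle : ∀ u, h u ≤ max 0 (R - Real.sqrt (u.1^2 + u.2^2)) := by
    intro u
    refine le_max_of_le_right ?_
    have h1 := norm_tri u.1 u.2 s t
    set q := Real.sqrt ((u.1-s)^2+(u.2-t)^2) with hq
    have hq2 : q^2 = (u.1-s)^2+(u.2-t)^2 := Real.sq_sqrt (by positivity)
    have h2 : q ≤ q^2/(2*c) + c/2 := by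
      rw [← sub_nonneg]
      have : q^2/(2*c) + c/2 - q = (q-c)^2/(2*c) := by field_simp; ring
      rw [this]; positivity
    simp only [h]
    rw [← hq2]
    linarith
  have h3 : ∫ u in (Ioc (s-dx/2) (s+dx/2)) ×ˢ (Ioc (t-dy/2) (t+dy/2)), h u
      = dx * dy * (K - (dx^2+dy^2)/(24*c)) := by
    have := setIntegral_prod (μ := (volume : Measure ℝ)) (ν := (volume : Measure ℝ)) h hIntegral
    refine this.trans ?_
    have inner : ∀ x : ℝ, ∫ y in Ioc (t-dy/2) (t+dy/2), h (x,y)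
        = dy * (K - (x-s)^2/(2*c)) - dy^3/(24*c) := by
      intro x
      rw [← intervalIntegral.integral_of_le (by linarith)]
      have e : ∀ y, h (x,y) = (K - (x-s)^2/(2*c)) - (1/(2*c)) * (y-t)^2 := by
        intro y; simp only [h]; field_simp; ring
      simp only [e]
      rw [intervalIntegral.integral_sub (Continuous.intervalIntegrable (by fun_prop) _ _)
        (Continuous.intervalIntegrable (by fun_prop) _ _), intervalIntegral.integral_const,
        intervalIntegral.integral_const_mul,
        intervalIntegral.integral_comp_sub_right (fun y => y^2), integral_pow]
      simp only [smul_eq_mul]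
      push_cast
      field_simp
      ring
    simp only [inner]
    rw [← intervalIntegral.integral_of_le (by linarith)]
    have e : ∀ x, dy * (K - (x-s)^2/(2*c)) - dy^3/(24*c)
        = (dy * K - dy^3/(24*c)) - (dy/(2*c)) * (x-s)^2 := by
      intro x; field_simp; ring
    simp only [e]
    rw [intervalIntegral.integral_sub (Continuous.intervalIntegrable (by fun_prop) _ _)
        (Continuous.intervalIntegrable (by fun_prop) _ _), intervalIntegral.integral_const,
        intervalIntegral.integral_const_mul,
        intervalIntegral.integral_comp_sub_right (fun y => y^2), integral_pow]
    simp only [smul_eq_mul]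
    push_cast
    field_simp
    ring
  calc _ ≤ dx * dy * (K - (dx^2+dy^2)/(24*c)) := by
        refine mul_le_mul_of_nonneg_left ?_ (by positivity)
        have : (dx^2+dy^2)/(24*c) ≤ c/2 := by
          rw [div_le_iff₀ (by positivity)]
          nlinarith
        linarith
    _ = _ := h3.symm
    _ ≤ _ := setIntegral_mono hIntegral (cone_integrable R).integrableOn hle

lemma lattice_disj (i j : ℤ) (d x : ℝ) (hd : 0 < d)
    (h1 : x ∈ Ioc ((i:ℝ) * d - d/2) (i * d + d/2)) (h2 : x ∈ Ioc ((j:ℝ) * d - d/2) (j * d + d/2)) :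
    i = j := by
  have a : (i:ℝ) < j + 1 := by
    by_contra h
    have := mul_le_mul_of_nonneg_right (not_lt.1 h) hd.le
    linarith [h1.1, h2.2]
  have b : (j:ℝ) < i + 1 := by
    by_contra h
    have := mul_le_mul_of_nonneg_right (not_lt.1 h) hd.le
    linarith [h1.2, h2.1]
  norm_cast at a b
  omega

open MeasureTheory in
lemma geo_bound (S : Finset (ℝ × ℝ)) (R dx dy : ℝ) (hR : 0 ≤ R)
    (hx : 0 < dx) (hy : 0 < dy) (hx1 : dx ≤ 1) (hy1 : dy ≤ 1)
    (hS : ∀ z ∈ S, (∃ i : ℤ, z.1 = (i : ℝ) * dx) ∧ ∃ j : ℤ, z.2 = (j : ℝ) * dy) :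
    dx * dy * (S.card * (R - 1 / Real.sqrt 6) - ∑ z ∈ S, Real.sqrt (z.1^2+z.2^2)) ≤
      Real.pi * R^3 / 3 := by
  let C : ℝ × ℝ → Set (ℝ × ℝ) := fun z =>
    (Ioc (z.1-dx/2) (z.1+dx/2)) ×ˢ (Ioc (z.2-dy/2) (z.2+dy/2))
  let g : ℝ × ℝ → ℝ := fun u => max 0 (R - Real.sqrt (u.1^2 + u.2^2))
  have hdis : Set.Pairwise (S : Set (ℝ × ℝ)) (Function.onFun Disjoint C) := by
    intro z hz w hw hzw
    refine Set.disjoint_left.2 ?_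
    intro u hu hu'
    apply hzw
    obtain ⟨⟨i, hi⟩, j, hj⟩ := hS z hz
    obtain ⟨⟨i', hi'⟩, j', hj'⟩ := hS w hw
    have a := hu.1
    have b := hu.2
    have a' := hu'.1
    have b' := hu'.2
    rw [hi] at a; rw [hi'] at a'; rw [hj] at b; rw [hj'] at b'
    ext
    · rw [hi, hi', lattice_disj i i' dx _ hx a a']
    · rw [hj, hj', lattice_disj j j' dy _ hy b b']
  have hU := integral_biUnion_finset (μ := volume) (f := g) S
    (fun z _ => (measurableSet_Ioc.prod measurableSet_Ioc : MeasurableSet (C z))) hdis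
    (fun z _ => (cone_integrable R).integrableOn)
  calc _ = ∑ z ∈ S, dx * dy * (R - Real.sqrt (z.1^2+z.2^2) - 1 / Real.sqrt 6) := by
        rw [← Finset.mul_sum]
        congr 1
        rw [Finset.sum_sub_distrib, Finset.sum_sub_distrib]
        simp only [Finset.sum_const, nsmul_eq_mul]
        ring
    _ ≤ ∑ z ∈ S, ∫ u in C z, g u := Finset.sum_le_sum fun z _ =>
        cell_bound R dx dy z.1 z.2 hx hy hx1 hy1
    _ = ∫ u in ⋃ z ∈ S, C z, g u := hU.symm
    _ ≤ ∫ u, g u := setIntegral_le_integral (cone_integrable R)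
        (Filter.Eventually.of_forall fun u => le_max_left _ _)
    _ = _ := cone_integral R hR

lemma norm_rpow_le (s t p : ℝ) (hp : 1 ≤ p) :
    Real.sqrt (s^2+t^2) ^ p ≤ (2:ℝ) ^ (max 0 (p/2-1)) * (|s|^p + |t|^p) := by
  have h0 : Real.sqrt (s^2+t^2) ^ p = (|s|^2 + |t|^2)^(p/2) := by
    rw [Real.sqrt_eq_rpow, ← Real.rpow_mul (by positivity), sq_abs, sq_abs]
    congr 1; ring
  have h1 : ∀ r : ℝ, (|r|^2)^(p/2) = |r|^p := by
    intro r
    rw [← Real.rpow_natCast, ← Real.rpow_mul (abs_nonneg _)]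
    congr 1; push_cast; ring
  rw [h0, ← h1 s, ← h1 t]
  have hs : 0 ≤ |s|^2 := by positivity
  have ht : 0 ≤ |t|^2 := by positivity
  generalize |s|^2 = a at *
  generalize |t|^2 = b at *
  rcases le_total (p/2) 1 with h | h
  · rw [max_eq_left (by linarith), Real.rpow_zero, one_mul]
    exact Real.rpow_add_le_add_rpow hs ht (by linarith) h
  · rw [max_eq_right (by linarith)]
    lift a to NNReal using hs
    lift b to NNReal using ht
    exact_mod_cast NNReal.rpow_add_le_mul_rpow_add_rpow a b h

lemma mean_bound (S : Finset (ℝ × ℝ)) (hne : S.Nonempty) (n p D : ℝ) (hn : 0 < n) (hp : 1 ≤ p)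
    (hD : 0 ≤ D) (hm : ∑ z ∈ S, (|z.1|^p + |z.2|^p) ≤ n * D) :
    ∑ z ∈ S, Real.sqrt (z.1^2+z.2^2) ≤
      S.card * ((2:ℝ) ^ (max 0 (1/2-1/p)) * D ^ (1/p) * (n / S.card) ^ (1/p)) := by
  have hN : (0:ℝ) < S.card := by exact_mod_cast hne.card_pos
  set N : ℝ := (S.card : ℝ) with hNdef
  have hp0 : 0 < p := by linarith
  have h1 := Real.rpow_arith_mean_le_arith_mean_rpow S (fun _ => 1/N)
    (fun z => Real.sqrt (z.1^2+z.2^2)) (fun _ _ => by positivity)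
    (by rw [Finset.sum_const, nsmul_eq_mul, ← hNdef]; field_simp) (fun _ _ => Real.sqrt_nonneg _) hp
  rw [← Finset.mul_sum, ← Finset.mul_sum] at h1
  have h2 : ∑ z ∈ S, Real.sqrt (z.1^2+z.2^2) ^ p ≤ (2:ℝ) ^ (max 0 (p/2-1)) * (n * D) := by
    refine (Finset.sum_le_sum fun z _ => norm_rpow_le z.1 z.2 p hp).trans ?_
    rw [← Finset.mul_sum]
    gcongr
  have hmax : max 0 (1/2-1/p) * p = max 0 (p/2-1) := by
    rw [max_mul_of_nonneg _ _ hp0.le]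
    congr 1
    · simp
    · field_simp
  have h3 : ((2:ℝ) ^ (max 0 (1/2-1/p)) * D ^ (1/p) * (n / N) ^ (1/p))^p =
      1/N * ((2:ℝ) ^ (max 0 (p/2-1)) * (n * D)) := by
    rw [Real.mul_rpow (by positivity) (by positivity), Real.mul_rpow (by positivity) (by positivity),
      ← Real.rpow_mul (by positivity), ← Real.rpow_mul (by positivity), ← Real.rpow_mul (by positivity),
      hmax, one_div_mul_cancel hp0.ne', Real.rpow_one, Real.rpow_one]
    field_simp
  have h4 : (1/N * ∑ z ∈ S, Real.sqrt (z.1^2+z.2^2))^p ≤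
      ((2:ℝ) ^ (max 0 (1/2-1/p)) * D ^ (1/p) * (n / N) ^ (1/p))^p := by
    rw [h3]
    refine h1.trans ?_
    gcongr
  have h5 := (Real.rpow_le_rpow_iff (mul_nonneg (by positivity)
    (Finset.sum_nonneg fun _ _ => Real.sqrt_nonneg _)) (by positivity) hp0).1 h4
  rw [one_div, inv_mul_le_iff₀ hN] at h5
  exact h5

lemma support_count (S : Finset (ℝ × ℝ)) (hne : S.Nonempty) (n : ℕ) (hn : 0 < n)
    (p cX cY α β gam : ℝ) (hp : 1 ≤ p) (hα : 0 < α) (hβ : 0 < β)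
    (hsum : α + β + gam = 1) (hcX : 0 ≤ cX) (hcY : 0 ≤ cY) (hcard : S.card ≤ n)
    (hS : ∀ z ∈ S, (∃ i : ℤ, z.1 = (i : ℝ) * (n:ℝ)^(-α)) ∧ ∃ j : ℤ, z.2 = (j : ℝ) * (n:ℝ)^(-β))
    (hm : ∑ z ∈ S, (|z.1|^p + |z.2|^p) ≤ n * (cX + cY)) :
    (S.card : ℝ) / n ≤ c1 p cX cY / (n:ℝ)^(gam * p / (2+p)) := by
  have hN : (0:ℝ) < S.card := by exact_mod_cast hne.card_pos
  have hn0 : (0:ℝ) < n := by exact_mod_cast hn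
  have hn1 : (1:ℝ) ≤ n := by exact_mod_cast hn
  have hNn : (S.card:ℝ) ≤ n := by exact_mod_cast hcard
  have hp0 : 0 < p := by linarith
  have hmean := mean_bound S hne n p (cX+cY) hn0 hp (by positivity) hm
  have hgeo := fun R hR => geo_bound S R ((n:ℝ)^(-α)) ((n:ℝ)^(-β)) hR (by positivity) (by positivity)
    (Real.rpow_le_one_of_one_le_of_nonpos hn1 (by linarith))
    (Real.rpow_le_one_of_one_le_of_nonpos hn1 (by linarith)) hS
  rw [← Real.rpow_add hn0, show -α + -β = gam - 1 by linarith] at hgeo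
  unfold c1
  set M := (2:ℝ) ^ (max 0 (1/2-1/p)) * (cX+cY) ^ (1/p) with hM
  have hM0 : 0 ≤ M := by positivity
  set c := 1 / Real.sqrt 6 with hc
  have hc0 : 0 < c := by positivity
  set N : ℝ := (S.card : ℝ) with hNdef
  set a := (n:ℝ)^(gam-1) with ha
  have ha0 : 0 < a := by positivity
  have hpi := Real.pi_pos
  set R := Real.sqrt (N * a) / Real.sqrt Real.pi with hR
  have hR0 : 0 ≤ R := by positivity
  have hR2 : Real.pi * R^2 = N * a := by
    rw [hR, div_pow, Real.sq_sqrt (by positivity), Real.sq_sqrt hpi.le]; field_simp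
  have hg := hgeo R hR0
  have hR3 : Real.pi * R^3 / 3 = a * (N * R / 3) := by linear_combination R/3 * hR2
  rw [hR3] at hg
  have hg := le_of_mul_le_mul_left hg ha0
  set t := ((n:ℝ)/N)^(1/p) with ht
  have ht1 : 1 ≤ t := Real.one_le_rpow ((one_le_div hN).2 hNn) (by positivity)
  have h1 : N * (2/3 * R) ≤ N * (c + M * t) := by linarith
  have h2 := le_of_mul_le_mul_left h1 hN
  have h3 : R ≤ 3/2 * ((M + c) * t) := by nlinarith
  set C := 3 * Real.sqrt Real.pi / 2 * (M + c) with hC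
  have hC0 : 0 < C := by positivity
  have h4 : Real.sqrt (N * a) ≤ C * t := by
    rw [hR, div_le_iff₀ (by positivity)] at h3
    calc _ ≤ _ := h3
      _ = _ := by rw [hC]; ring
  have h5 := Real.rpow_le_rpow (Real.sqrt_nonneg _) h4 (show 0 ≤ 2*p/(2+p) by positivity)
  rw [Real.mul_rpow hC0.le (by positivity), Real.sqrt_eq_rpow, ← Real.rpow_mul (by positivity), ht,
    ← Real.rpow_mul (by positivity), Real.mul_rpow hN.le ha0.le, Real.div_rpow hn0.le hN.le, ha,
    ← Real.rpow_mul hn0.le] at h5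
  have e1 : 1/2 * (2*p/(2+p)) = p/(2+p) := by field_simp
  have e2 : 1/p * (2*p/(2+p)) = 2/(2+p) := by field_simp
  rw [e1, e2] at h5
  set K := C ^ (2*p/(2+p)) with hK
  have h6 : N ^ (p/(2+p)) * (n:ℝ)^((gam-1)*(p/(2+p))) * N^(2/(2+p)) ≤ K * (n:ℝ)^(2/(2+p)) := by
    have hpos : 0 < N^(2/(2+p)) := by positivity
    rw [← mul_div_assoc (a := K), le_div_iff₀ hpos] at h5
    exact h5
  have h7 : N ^ (p/(2+p)) * N^(2/(2+p)) = N := by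
    rw [← Real.rpow_add hN]
    have : p/(2+p) + 2/(2+p) = 1 := by field_simp; ring
    rw [this, Real.rpow_one]
  have h8 : N * (n:ℝ)^((gam-1)*(p/(2+p))) ≤ K * (n:ℝ)^(2/(2+p)) := by
    rw [mul_right_comm, h7] at h6
    exact h6
  rw [div_le_div_iff₀ hn0 (by positivity)]
  have h9 := mul_le_mul_of_nonneg_right h8 (show 0 ≤ (n:ℝ)^(p/(2+p)) by positivity)
  rw [mul_assoc, mul_assoc, ← Real.rpow_add hn0, ← Real.rpow_add hn0] at h9
  have e3 : (gam-1)*(p/(2+p)) + p/(2+p) = gam * p/(2+p) := by ring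
  have e4 : 2/(2+p) + p/(2+p) = 1 := by field_simp
  rw [e3, e4, Real.rpow_one] at h9
  exact h9

lemma finsum_fiber {P : ℝ × ℝ → ℝ} {S : Finset (ℝ × ℝ)} (hS : ∀ z, z ∉ S → P z = 0) (b : ℝ) :
    margY P b = ∑ z ∈ S with z.2 = b, P z := by
  classical
  unfold margY
  rw [finsum_eq_sum_of_support_subset (s := S.image Prod.fst)]
  · symm
    have h1 : ∑ z ∈ S with z.2 = b, P z = ∑ z ∈ (S.filter (fun z => z.2 = b)), P (z.1, b) :=
      Finset.sum_congr rfl fun z hz => by rw [← (Finset.mem_filter.1 hz).2]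
    rw [h1, ← Finset.sum_image (f := fun x => P (x, b)) (g := Prod.fst)
      (s := S.filter (fun z => z.2 = b))]
    · apply Finset.sum_subset
      · exact Finset.image_subset_image (Finset.filter_subset _ _)
      · intro x _ hx
        apply hS
        intro h
        exact hx (Finset.mem_image.2 ⟨(x, b), by simp [h], rfl⟩)
    · intro z hz w hw h
      have a1 := (Finset.mem_filter.1 hz).2
      have a2 := (Finset.mem_filter.1 hw).2
      exact Prod.ext h (a1.trans a2.symm)
  · intro x hx
    have : (x, b) ∈ S := by by_contra h; exact hx (hS _ h)
    simp only [Finset.coe_image, mem_image]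
    exact ⟨(x, b), this, rfl⟩

lemma entropy_eq {γ : Type*} (b : ℝ) (n : ℕ) (hn : 0 < n) (Q : γ → ℝ) (S : Finset γ) (k : γ → ℕ)
    (hQ : ∀ z, Q z = k z / n) (hS : ∀ z, z ∉ S → k z = 0) (hsum : ∑ z ∈ S, k z = n) :
    n * entropy b Q = n * Real.logb b n - Real.logb b (∏ z ∈ S, (k z : ℝ) ^ (k z)) := by
  have hn0 : (n:ℝ) ≠ 0 := by exact_mod_cast hn.ne'
  have hne : ∀ z ∈ S, ((k z : ℝ)) ^ (k z) ≠ 0 := by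
    intro z _
    rcases Nat.eq_zero_or_pos (k z) with h | h
    · simp [h]
    · positivity
  unfold entropy
  rw [finsum_eq_sum_of_support_subset (s := S)]
  · rw [Real.logb_prod _ _ hne, mul_neg, Finset.mul_sum]
    have h1 : ∀ z ∈ S, (n:ℝ) * (Q z * Real.logb b (Q z)) =
        Real.logb b ((k z : ℝ) ^ (k z)) - k z * Real.logb b n := by
      intro z _
      rw [hQ z, Real.logb_pow]
      rcases Nat.eq_zero_or_pos (k z) with h | h
      · simp [h]
      · rw [Real.logb_div (by positivity) hn0]; field_simp
    rw [Finset.sum_congr rfl h1, Finset.sum_sub_distrib, ← Finset.sum_mul, ← Nat.cast_sum, hsum]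
    ring
  · intro z hz
    by_contra h
    apply hz
    simp [hQ z, hS z h]

open Nat in
lemma main_X (n : ℕ) (hn : 0 < n) (b p cX cY α β gam : ℝ) (hb : 1 < b) (hp : 1 ≤ p)
    (hα : α ∈ Set.Ioo (0 : ℝ) 1) (hβ : β ∈ Set.Ioo (0 : ℝ) 1)
    (hsum : α + β + gam = 1)
    (P : ℝ × ℝ → ℝ) (hP : IsJointType n ((n : ℝ) ^ (-α)) ((n : ℝ) ^ (-β)) P)
    (hcX : (∑ᶠ x, margX P x * |x| ^ p) ≤ cX)
    (hcY : (∑ᶠ y, margY P y * |y| ^ p) ≤ cY)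
    (y : Fin n → ℝ) (hy : y ∈ typeClass n (margY P)) :
      condEntXY b P - c1 p cX cY * Real.logb b ((n : ℝ) + 1) / (n : ℝ) ^ (gam * p / (2 + p)) ≤
          (1 / (n : ℝ)) * Real.logb b ((condTypeClassX n P y).ncard) ∧
        (1 / (n : ℝ)) * Real.logb b ((condTypeClassX n P y).ncard) ≤
          condEntXY b P +
            c3 p cY * Real.logb b ((n : ℝ) + 1) / (n : ℝ) ^ ((1 - β) * p / (1 + p)) := by
  classical
  obtain ⟨hP0, hlat, hIntegral, hfin, hone⟩ := hP
  choose k hk using hIntegral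
  have hn0 : (0:ℝ) < n := by exact_mod_cast hn
  set S := hfin.toFinset with hSdef
  have hSP : ∀ z, z ∉ S → P z = 0 := by
    intro z hz; by_contra h; exact hz (hfin.mem_toFinset.2 h)
  have hSk : ∀ z, z ∉ S → k z = 0 := by
    intro z hz
    have := hSP z hz
    rw [hk z, div_eq_zero_iff] at this
    rcases this with h | h
    · exact_mod_cast h
    · exact absurd h hn0.ne'
  have hkpos : ∀ z ∈ S, 1 ≤ k z := by
    intro z hz
    rw [Nat.one_le_iff_ne_zero]
    intro h
    exact (hfin.mem_toFinset.1 hz) (by rw [hk z, h]; simp)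
  have hPsum : ∑ z ∈ S, P z = 1 := by
    rw [← hone, finsum_eq_sum_of_support_subset]
    intro z hz; exact hfin.mem_toFinset.2 hz
  have hksum : ∑ z ∈ S, k z = n := by
    have : ∑ z ∈ S, (k z : ℝ) / n = 1 := by
      rw [← hPsum]; exact Finset.sum_congr rfl fun z _ => (hk z).symm
    rw [← Finset.sum_div, div_eq_one_iff_eq hn0.ne'] at this
    exact_mod_cast this
  have hne : S.Nonempty := by
    by_contra h
    rw [Finset.not_nonempty_iff_eq_empty] at h
    rw [h] at hksum; simp at hksum; omega
  have hcard : S.card ≤ n := by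
    rw [← hksum, Finset.card_eq_sum_ones]; exact Finset.sum_le_sum hkpos
  let m : ℝ → ℕ := fun c => ∑ z ∈ S with z.2 = c, k z
  let B := S.image Prod.snd
  have hmarg : ∀ c, margY P c = (m c : ℝ) / n := by
    intro c
    rw [finsum_fiber hSP c]
    simp only [m]
    push_cast
    rw [Finset.sum_div]
    exact Finset.sum_congr rfl fun z _ => hk z
  have hmB : ∀ c, c ∉ B → m c = 0 := by
    intro c hc
    refine Finset.sum_eq_zero ?_
    intro z hz
    exact absurd (Finset.mem_image.2 ⟨z, (Finset.mem_filter.1 hz).1, (Finset.mem_filter.1 hz).2⟩) hc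
  have hmaps : ∀ z ∈ S, z.2 ∈ B := fun z hz => Finset.mem_image_of_mem _ hz
  have hmsum : ∑ c ∈ B, m c = n := by
    rw [← hksum]; exact Finset.sum_fiberwise_of_maps_to hmaps k
  -- moments
  have momY : ∑ᶠ y, margY P y * |y| ^ p = ∑ z ∈ S, P z * |z.2|^p := by
    rw [finsum_eq_sum_of_support_subset (s := B)]
    · rw [← Finset.sum_fiberwise_of_maps_to hmaps]
      refine Finset.sum_congr rfl fun c _ => ?_
      rw [finsum_fiber hSP c, Finset.sum_mul]
      exact Finset.sum_congr rfl fun z hz => by rw [(Finset.mem_filter.1 hz).2]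
    · intro c hc
      by_contra h
      exact hc (by simp [hmarg c, hmB c h])
  have momX : ∑ᶠ x, margX P x * |x| ^ p = ∑ z ∈ S, P z * |z.1|^p := by
    have hmX : ∀ c, margX P c = ∑ z ∈ S with z.1 = c, P z := by
      intro c
      have hsw : ∀ z, z ∉ S.image Prod.swap → (fun z : ℝ × ℝ => P z.swap) z = 0 := by
        intro z hz
        refine hSP _ fun h => hz (Finset.mem_image.2 ⟨_, h, by simp⟩)
      have := finsum_fiber hsw c
      change margX P c = _ at this
      rw [this, Finset.filter_image, Finset.sum_image (fun _ _ _ _ h => Prod.swap_injective h)]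
      simp
    have hmaps1 : ∀ z ∈ S, z.1 ∈ S.image Prod.fst := fun z hz => Finset.mem_image_of_mem _ hz
    rw [finsum_eq_sum_of_support_subset (s := S.image Prod.fst)]
    · rw [← Finset.sum_fiberwise_of_maps_to hmaps1]
      refine Finset.sum_congr rfl fun c _ => ?_
      rw [hmX c, Finset.sum_mul]
      exact Finset.sum_congr rfl fun z hz => by rw [(Finset.mem_filter.1 hz).2]
    · intro c hc
      by_contra h
      apply hc
      dsimp only
      rw [hmX c, Finset.sum_eq_zero, zero_mul]
      intro z hz
      exact absurd (Finset.mem_image.2 ⟨z, (Finset.mem_filter.1 hz).1, (Finset.mem_filter.1 hz).2⟩) h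
  rw [momX] at hcX
  rw [momY] at hcY
  have hcX0 : 0 ≤ cX := le_trans (Finset.sum_nonneg fun z _ => mul_nonneg (hP0 z) (by positivity)) hcX
  have hcY0 : 0 ≤ cY := le_trans (Finset.sum_nonneg fun z _ => mul_nonneg (hP0 z) (by positivity)) hcY
  have hmom : ∑ z ∈ S, (|z.1|^p + |z.2|^p) ≤ n * (cX + cY) := by
    calc _ ≤ ∑ z ∈ S, n * (P z * |z.1|^p + P z * |z.2|^p) := by
          refine Finset.sum_le_sum fun z hz => ?_
          have h1 : (1:ℝ) ≤ k z := by exact_mod_cast hkpos z hz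
          have h2 : 0 ≤ |z.1|^p + |z.2|^p := by positivity
          have : (n:ℝ) * (P z * |z.1|^p + P z * |z.2|^p) = k z * (|z.1|^p + |z.2|^p) := by
            rw [hk z]; field_simp
          rw [this]; nlinarith
      _ = n * (∑ z ∈ S, P z * |z.1|^p + ∑ z ∈ S, P z * |z.2|^p) := by
          rw [← Finset.mul_sum, Finset.sum_add_distrib]
      _ ≤ _ := by gcongr
  have hcount := support_count S hne n hn p cX cY α β gam hp hα.1 hβ.1 hsum hcX0 hcY0 hcard
    (fun z hz => hlat z (hfin.mem_toFinset.1 hz)) hmom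
  -- combinatorics
  have hyc : ∀ c, {i | y i = c}.ncard = ∑ z ∈ S with z.2 = c, k z := by
    intro c
    have h1 := hy c
    rw [hmarg c, empDist, div_left_inj' hn0.ne'] at h1
    exact_mod_cast h1
  have hclass : condTypeClassX n P y = {x : Fin n → ℝ | ∀ z, {i | (x i, y i) = z}.ncard = k z} := by
    ext x
    simp only [condTypeClassX, typeClass, empDist, mem_ofPred_eq]
    refine forall_congr' fun z => ?_
    rw [hk z, div_left_inj' hn0.ne']
    norm_cast
  have hcc := class_card k S hSk y hyc
  rw [← hclass] at hcc
  set T := (condTypeClassX n P y).ncard with hTdef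
  have hfib : ∀ f : ℝ × ℝ → ℕ, ∏ c ∈ B, ∏ z ∈ S with z.2 = c, f z = ∏ z ∈ S, f z :=
    fun f => Finset.prod_fiberwise_of_maps_to hmaps f
  have hcardfib : ∑ c ∈ B, (S.filter (fun z => z.2 = c)).card = S.card :=
    (Finset.card_eq_sum_card_fiberwise (f := Prod.snd) hmaps).symm
  have hfac : 0 < ∏ z ∈ S, (k z)! := Finset.prod_pos fun z _ => Nat.factorial_pos _
  have hselfpos : ∀ j : ℕ, 0 < j ^ j := by
    intro j
    rcases Nat.eq_zero_or_pos j with h | h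
    · simp [h]
    · positivity
  have hKpos : 0 < ∏ z ∈ S, k z ^ k z := Finset.prod_pos fun z _ => hselfpos _
  have hMpos : 0 < ∏ c ∈ B, m c ^ m c := Finset.prod_pos fun z _ => hselfpos _
  have hmle : ∀ c, m c ≤ n := fun c => by
    rw [← hksum]; exact Finset.sum_le_sum_of_subset (Finset.filter_subset _ _)
  have lower : ∏ c ∈ B, m c ^ m c ≤ T * (∏ z ∈ S, k z ^ k z) * (n+1)^S.card := by
    have := Finset.prod_le_prod' (s := B) (fun c _ =>
      multi_lower (S.filter (fun z => z.2 = c)) k n (hmle c))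
    rw [Finset.prod_mul_distrib, Finset.prod_mul_distrib, Finset.prod_mul_distrib, hfib, hfib,
      Finset.prod_pow_eq_pow_sum, hcardfib, ← hcc] at this
    refine Nat.le_of_mul_le_mul_right (this.trans_eq ?_) hfac
    ring
  have upper : T * (∏ z ∈ S, k z ^ k z) ≤ ∏ c ∈ B, m c ^ m c := by
    have := Finset.prod_le_prod' (s := B) (fun c _ =>
      multi_upper (S.filter (fun z => z.2 = c)) k)
    rw [Finset.prod_mul_distrib, Finset.prod_mul_distrib, hfib, hfib, ← hcc] at this
    refine Nat.le_of_mul_le_mul_right (le_trans (le_of_eq ?_) this) hfac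
    ring
  have hTpos : 0 < T := by
    rcases Nat.eq_zero_or_pos T with h | h
    · rw [h] at lower; simp at lower; omega
    · exact h
  -- logs
  have hent : n * condEntXY b P =
      Real.logb b (∏ c ∈ B, (m c : ℝ) ^ (m c)) - Real.logb b (∏ z ∈ S, (k z : ℝ) ^ (k z)) := by
    have h1 := entropy_eq b n hn P S k hk hSk hksum
    have h2 := entropy_eq b n hn (margY P) B m hmarg hmB hmsum
    unfold condEntXY
    rw [mul_sub, h1, h2]; ring
  have hKpos' : (0:ℝ) < ∏ z ∈ S, (k z : ℝ) ^ (k z) := by exact_mod_cast hKpos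
  have hMpos' : (0:ℝ) < ∏ c ∈ B, (m c : ℝ) ^ (m c) := by exact_mod_cast hMpos
  have hT' : (0:ℝ) < T := by exact_mod_cast hTpos
  have lower' : Real.logb b (∏ c ∈ B, (m c : ℝ) ^ (m c)) ≤
      Real.logb b T + Real.logb b (∏ z ∈ S, (k z : ℝ) ^ (k z)) + S.card * Real.logb b ((n:ℝ)+1) := by
    rw [← Real.logb_pow, ← Real.logb_mul hT'.ne' hKpos'.ne',
      ← Real.logb_mul (by positivity) (by positivity)]
    refine Real.logb_le_logb_of_le hb hMpos' ?_
    exact_mod_cast lower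
  have upper' : Real.logb b T + Real.logb b (∏ z ∈ S, (k z : ℝ) ^ (k z)) ≤
      Real.logb b (∏ c ∈ B, (m c : ℝ) ^ (m c)) := by
    rw [← Real.logb_mul hT'.ne' hKpos'.ne']
    refine Real.logb_le_logb_of_le hb (by positivity) ?_
    exact_mod_cast upper
  have hL : 0 ≤ Real.logb b ((n:ℝ)+1) := Real.logb_nonneg hb (by linarith)
  constructor
  · have h1 : condEntXY b P ≤ 1/(n:ℝ) * Real.logb b T + S.card / n * Real.logb b ((n:ℝ)+1) := by
      have : n * condEntXY b P ≤ n * (1/(n:ℝ) * Real.logb b T + S.card / n * Real.logb b ((n:ℝ)+1)) := by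
        rw [hent]
        have : n * (1/(n:ℝ) * Real.logb b T + S.card / n * Real.logb b ((n:ℝ)+1)) =
          Real.logb b T + S.card * Real.logb b ((n:ℝ)+1) := by field_simp
        rw [this]; linarith
      exact le_of_mul_le_mul_left this hn0
    have h2 := mul_le_mul_of_nonneg_right hcount hL
    rw [div_mul_eq_mul_div (c1 p cX cY)] at h2
    linarith
  · have h1 : 1/(n:ℝ) * Real.logb b T ≤ condEntXY b P := by
      rw [one_div, inv_mul_le_iff₀ hn0, hent]; linarith
    have h2 : 0 ≤ c3 p cY * Real.logb b ((n : ℝ) + 1) / (n : ℝ) ^ ((1 - β) * p / (1 + p)) := by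
      have : 0 ≤ c3 p cY := by unfold c3; positivity
      positivity
    linarith

/-- Lemma 4 (Size of a conditional type class). -/
theorem size_of_conditional_type_class
    (n : ℕ) (hn : 0 < n) (b p cX cY α β gam : ℝ) (hb : 1 < b) (hp : 1 ≤ p)
    (hα : α ∈ Set.Ioo (0 : ℝ) 1) (hβ : β ∈ Set.Ioo (0 : ℝ) 1) (hγ : gam ∈ Set.Ioo (0 : ℝ) 1)
    (hsum : α + β + gam = 1)
    (P : ℝ × ℝ → ℝ) (hP : IsJointType n ((n : ℝ) ^ (-α)) ((n : ℝ) ^ (-β)) P)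
    (hcX : (∑ᶠ x, margX P x * |x| ^ p) ≤ cX)
    (hcY : (∑ᶠ y, margY P y * |y| ^ p) ≤ cY) :
    (∀ y : Fin n → ℝ, y ∈ typeClass n (margY P) →
      condEntXY b P - c1 p cX cY * Real.logb b ((n : ℝ) + 1) / (n : ℝ) ^ (gam * p / (2 + p)) ≤
          (1 / (n : ℝ)) * Real.logb b ((condTypeClassX n P y).ncard) ∧
        (1 / (n : ℝ)) * Real.logb b ((condTypeClassX n P y).ncard) ≤
          condEntXY b P +
            c3 p cY * Real.logb b ((n : ℝ) + 1) / (n : ℝ) ^ ((1 - β) * p / (1 + p))) ∧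
    (∀ x : Fin n → ℝ, x ∈ typeClass n (margX P) →
      condEntYX b P - c1 p cX cY * Real.logb b ((n : ℝ) + 1) / (n : ℝ) ^ (gam * p / (2 + p)) ≤
          (1 / (n : ℝ)) * Real.logb b ((condTypeClassY n P x).ncard) ∧
        (1 / (n : ℝ)) * Real.logb b ((condTypeClassY n P x).ncard) ≤
          condEntYX b P +
            c2 p cX * Real.logb b ((n : ℝ) + 1) / (n : ℝ) ^ ((1 - α) * p / (1 + p))) := by
  refine ⟨fun y hy => main_X n hn b p cX cY α β gam hb hp hα hβ hsum P hP hcX hcY y hy, ?_⟩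
  intro x hx
  let Q : ℝ × ℝ → ℝ := fun z => P z.swap
  have hQ : IsJointType n ((n : ℝ) ^ (-β)) ((n : ℝ) ^ (-α)) Q := by
    obtain ⟨h1, h2, h3, h4, h5⟩ := hP
    refine ⟨fun z => h1 _, fun z hz => (h2 _ hz).symm, fun z => h3 _, ?_, ?_⟩
    · exact h4.preimage (f := Prod.swap) Prod.swap_injective.injOn
    · rw [← h5]
      exact finsum_comp_equiv (Equiv.prodComm ℝ ℝ) (f := P)
  have h := main_X n hn b p cY cX β α gam hb hp hβ hα (by linarith) Q hQ hcY hcX x hx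
  have hent : condEntXY b Q = condEntYX b P := by
    have : entropy b Q = entropy b P := by
      unfold entropy
      congr 1
      exact finsum_comp_equiv (Equiv.prodComm ℝ ℝ) (f := fun z => P z * Real.logb b (P z))
    unfold condEntXY condEntYX
    rw [this]
    rfl
  have hcl : condTypeClassX n Q x = condTypeClassY n P x := by
    ext y
    simp only [condTypeClassX, condTypeClassY, typeClass, empDist, Set.mem_ofPred_eq]
    refine (Equiv.prodComm ℝ ℝ).forall_congr fun {z} => ?_
    simp only [Q, Equiv.prodComm_apply, Prod.ext_iff, Prod.fst_swap, Prod.snd_swap, and_comm]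
  have hc : c1 p cY cX = c1 p cX cY := by unfold c1; rw [add_comm cY cX]
  rw [hent, hcl, hc] at h
  exact h
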